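/- arXiv:2001.09688 — 2 statements merged into one kernel-verified Lean document; each statement's English description precedes it below -/
import Mathlib

section
/- Let X1, X2 be rank-one K-projections and α, β real numbers such that γ := (1+α)(1+β) − αβ·tr(X1 K X2 K) ≠ 0. Then the m×m matrix 1_m + α X1 K + β X2 K is invertible, with inverse 1_m − (α(1+β)/γ) X1 K − ((1+α)β/γ) X2 K + (αβ/γ)(X1 K X2 K + X2 K X1 K). -/
open Matrix

/-- The space of real `m × n` matrices. -/
abbrev Mat (m n : ℕ) := Matrix (Fin m) (Fin n) ℝ

/-- `X` is a rank-one `K`-projection, i.e. `X ∈ S`. -/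
def InS {m n : ℕ} (K : Matrix (Fin n) (Fin m) ℝ) (X : Mat m n) : Prop :=
  X * K * X = X ∧ X.rank = 1

/-- `A(p,q,λ,X) = 1ₘ − ((p−q)/(λ−q)) X K`. -/
noncomputable def Amat {m n : ℕ} (K : Matrix (Fin n) (Fin m) ℝ) (p q lam : ℝ) (X : Mat m n) :
    Matrix (Fin m) (Fin m) ℝ :=
  1 - ((p - q) / (lam - q)) • (X * K)

/-- `Ã(p,q,λ,X) = 1ₙ − ((p−q)/(λ−q)) K X`. -/
noncomputable def Atil {m n : ℕ} (K : Matrix (Fin n) (Fin m) ℝ) (p q lam : ℝ) (X : Mat m n) :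
    Matrix (Fin n) (Fin n) ℝ :=
  1 - ((p - q) / (lam - q)) • (K * X)

/-- `B(p,q,λ,X) = 1ₘ + ((p−q)/(λ−p)) X K`. -/
noncomputable def Bmat {m n : ℕ} (K : Matrix (Fin n) (Fin m) ℝ) (p q lam : ℝ) (X : Mat m n) :
    Matrix (Fin m) (Fin m) ℝ :=
  1 + ((p - q) / (lam - p)) • (X * K)

/-- `B̃(p,q,λ,X) = 1ₙ + ((p−q)/(λ−p)) K X`. -/
noncomputable def Btil {m n : ℕ} (K : Matrix (Fin n) (Fin m) ℝ) (p q lam : ℝ) (X : Mat m n) :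
    Matrix (Fin n) (Fin n) ℝ :=
  1 + ((p - q) / (lam - p)) • (K * X)

/-- `α₁₂⁻¹ = 1 − ((p1−q1)(p2−q2))/((p2−p1)(q2−q1)) · tr(K X1 K X2)`. -/
noncomputable def adenom {m n : ℕ} (K : Matrix (Fin n) (Fin m) ℝ) (p1 q1 p2 q2 : ℝ)
    (X1 X2 : Mat m n) : ℝ :=
  1 - (p1 - q1) * (p2 - q2) / ((p2 - p1) * (q2 - q1)) * (K * X1 * K * X2).trace

/-- The Yang–Baxter map `R(p1,q1;p2,q2)`. -/
noncomputable def Rmap {m n : ℕ} (K : Matrix (Fin n) (Fin m) ℝ) (p1 q1 p2 q2 : ℝ)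
    (X : Mat m n × Mat m n) : Mat m n × Mat m n :=
  ((adenom K p1 q1 p2 q2 X.1 X.2)⁻¹ •
      ((1 - ((p2 - q2) / (p2 - p1)) • (X.2 * K)) * X.1 *
        (1 - ((p2 - q2) / (q1 - q2)) • (K * X.2))),
   (adenom K p1 q1 p2 q2 X.1 X.2)⁻¹ •
      ((1 - ((p1 - q1) / (q2 - q1)) • (X.1 * K)) * X.2 *
        (1 - ((p1 - q1) / (p1 - p2)) • (K * X.1))))

/-- Trace denominator of the first component of the map `T`:
`tr[A₂(p1,X2) X1 B̃₂(q1,X2) K]`. -/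
noncomputable def Tden1 {m n : ℕ} (K : Matrix (Fin n) (Fin m) ℝ) (p1 q1 p2 q2 : ℝ)
    (X1 X2 : Mat m n) : ℝ :=
  (Amat K p2 q2 p1 X2 * X1 * Btil K p2 q2 q1 X2 * K).trace

/-- Trace denominator of the second component of the map `T`:
`tr[A₁(p2,X1) X2 B̃₁(q2,X1) K]`. -/
noncomputable def Tden2 {m n : ℕ} (K : Matrix (Fin n) (Fin m) ℝ) (p1 q1 p2 q2 : ℝ)
    (X1 X2 : Mat m n) : ℝ :=
  (Amat K p1 q1 p2 X1 * X2 * Btil K p1 q1 q2 X1 * K).trace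

/-- The (non-Yang–Baxter) map `T(p1,q1;p2,q2)`. -/
noncomputable def Tmap {m n : ℕ} (K : Matrix (Fin n) (Fin m) ℝ) (p1 q1 p2 q2 : ℝ)
    (X : Mat m n × Mat m n) : Mat m n × Mat m n :=
  ((Tden1 K p1 q1 p2 q2 X.1 X.2)⁻¹ • (Amat K p2 q2 p1 X.2 * X.1 * Btil K p2 q2 q1 X.2),
   (Tden2 K p1 q1 p2 q2 X.1 X.2)⁻¹ • (Amat K p1 q1 p2 X.1 * X.2 * Btil K p1 q1 q2 X.1))

/-- Trace denominator of the first component of `T⁻¹`: `tr[B₂(q1,X2) X1 Ã₂(p1,X2) K]`. -/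
noncomputable def Tinvden1 {m n : ℕ} (K : Matrix (Fin n) (Fin m) ℝ) (p1 q1 p2 q2 : ℝ)
    (X1 X2 : Mat m n) : ℝ :=
  (Bmat K p2 q2 q1 X2 * X1 * Atil K p2 q2 p1 X2 * K).trace

/-- Trace denominator of the second component of `T⁻¹`: `tr[B₁(q2,X1) X2 Ã₁(p2,X1) K]`. -/
noncomputable def Tinvden2 {m n : ℕ} (K : Matrix (Fin n) (Fin m) ℝ) (p1 q1 p2 q2 : ℝ)
    (X1 X2 : Mat m n) : ℝ :=
  (Bmat K p1 q1 q2 X1 * X2 * Atil K p1 q1 p2 X1 * K).trace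

/-- The map `Tinv(p1,q1;p2,q2)`, the inverse of `T(p1,q1;p2,q2)`. -/
noncomputable def Tinvmap {m n : ℕ} (K : Matrix (Fin n) (Fin m) ℝ) (p1 q1 p2 q2 : ℝ)
    (X : Mat m n × Mat m n) : Mat m n × Mat m n :=
  ((Tinvden1 K p1 q1 p2 q2 X.1 X.2)⁻¹ • (Bmat K p2 q2 q1 X.2 * X.1 * Atil K p2 q2 p1 X.2),
   (Tinvden2 K p1 q1 p2 q2 X.1 X.2)⁻¹ • (Bmat K p1 q1 q2 X.1 * X.2 * Atil K p1 q1 p2 X.1))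

/-- Trace denominator of the first component of `R⁻¹`: `tr[A₂(q1,X2) X1 B̃₂(p1,X2) K]`. -/
noncomputable def Rinvden1 {m n : ℕ} (K : Matrix (Fin n) (Fin m) ℝ) (p1 q1 p2 q2 : ℝ)
    (X1 X2 : Mat m n) : ℝ :=
  (Amat K p2 q2 q1 X2 * X1 * Btil K p2 q2 p1 X2 * K).trace

/-- Trace denominator of the second component of `R⁻¹`: `tr[B₁(p2,X1) X2 Ã₁(q2,X1) K]`. -/
noncomputable def Rinvden2 {m n : ℕ} (K : Matrix (Fin n) (Fin m) ℝ) (p1 q1 p2 q2 : ℝ)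
    (X1 X2 : Mat m n) : ℝ :=
  (Bmat K p1 q1 p2 X1 * X2 * Atil K p1 q1 q2 X1 * K).trace

/-- The map `Rinv(p1,q1;p2,q2)`, the inverse of `R(p1,q1;p2,q2)`. -/
noncomputable def Rinvmap {m n : ℕ} (K : Matrix (Fin n) (Fin m) ℝ) (p1 q1 p2 q2 : ℝ)
    (X : Mat m n × Mat m n) : Mat m n × Mat m n :=
  ((Rinvden1 K p1 q1 p2 q2 X.1 X.2)⁻¹ • (Amat K p2 q2 q1 X.2 * X.1 * Btil K p2 q2 p1 X.2),
   (Rinvden2 K p1 q1 p2 q2 X.1 X.2)⁻¹ • (Bmat K p1 q1 p2 X.1 * X.2 * Atil K p1 q1 q2 X.1))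

/-- `R` acting on components 1 and 2 of a triple. -/
noncomputable def R12t {m n : ℕ} (K : Matrix (Fin n) (Fin m) ℝ) (p1 q1 p2 q2 : ℝ)
    (X : Mat m n × Mat m n × Mat m n) : Mat m n × Mat m n × Mat m n :=
  ((Rmap K p1 q1 p2 q2 (X.1, X.2.1)).1, (Rmap K p1 q1 p2 q2 (X.1, X.2.1)).2, X.2.2)

/-- `R` acting on components 1 and 3 of a triple. -/
noncomputable def R13t {m n : ℕ} (K : Matrix (Fin n) (Fin m) ℝ) (p1 q1 p3 q3 : ℝ)
    (X : Mat m n × Mat m n × Mat m n) : Mat m n × Mat m n × Mat m n :=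
  ((Rmap K p1 q1 p3 q3 (X.1, X.2.2)).1, X.2.1, (Rmap K p1 q1 p3 q3 (X.1, X.2.2)).2)

/-- `R` acting on components 2 and 3 of a triple. -/
noncomputable def R23t {m n : ℕ} (K : Matrix (Fin n) (Fin m) ℝ) (p2 q2 p3 q3 : ℝ)
    (X : Mat m n × Mat m n × Mat m n) : Mat m n × Mat m n × Mat m n :=
  (X.1, Rmap K p2 q2 p3 q3 (X.2.1, X.2.2))

/-- `T` acting on components 1 and 2 of a triple. -/
noncomputable def T12t {m n : ℕ} (K : Matrix (Fin n) (Fin m) ℝ) (p1 q1 p2 q2 : ℝ)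
    (X : Mat m n × Mat m n × Mat m n) : Mat m n × Mat m n × Mat m n :=
  ((Tmap K p1 q1 p2 q2 (X.1, X.2.1)).1, (Tmap K p1 q1 p2 q2 (X.1, X.2.1)).2, X.2.2)

/-- `T` acting on components 1 and 3 of a triple. -/
noncomputable def T13t {m n : ℕ} (K : Matrix (Fin n) (Fin m) ℝ) (p1 q1 p3 q3 : ℝ)
    (X : Mat m n × Mat m n × Mat m n) : Mat m n × Mat m n × Mat m n :=
  ((Tmap K p1 q1 p3 q3 (X.1, X.2.2)).1, X.2.1, (Tmap K p1 q1 p3 q3 (X.1, X.2.2)).2)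

/-- `T` acting on components 2 and 3 of a triple. -/
noncomputable def T23t {m n : ℕ} (K : Matrix (Fin n) (Fin m) ℝ) (p2 q2 p3 q3 : ℝ)
    (X : Mat m n × Mat m n × Mat m n) : Mat m n × Mat m n × Mat m n :=
  (X.1, Tmap K p2 q2 p3 q3 (X.2.1, X.2.2))

/-- `T⁻¹` acting on components 2 and 3 of a triple. -/
noncomputable def Tinv23t {m n : ℕ} (K : Matrix (Fin n) (Fin m) ℝ) (p2 q2 p3 q3 : ℝ)
    (X : Mat m n × Mat m n × Mat m n) : Mat m n × Mat m n × Mat m n :=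
  (X.1, Tinvmap K p2 q2 p3 q3 (X.2.1, X.2.2))

/-- `R⁻¹` acting on components 2 and 3 of a triple. -/
noncomputable def Rinv23t {m n : ℕ} (K : Matrix (Fin n) (Fin m) ℝ) (p2 q2 p3 q3 : ℝ)
    (X : Mat m n × Mat m n × Mat m n) : Mat m n × Mat m n × Mat m n :=
  (X.1, Rinvmap K p2 q2 p3 q3 (X.2.1, X.2.2))

theorem rank_one_factor {m n : ℕ} (X : Mat m n) (h : X.rank = 1) :
    ∃ u : Fin m → ℝ, ∃ v : Fin n → ℝ, X = Matrix.vecMulVec u v := by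
  obtain ⟨u, -, hu⟩ := finrank_eq_one_iff'.mp h
  have h2 : ∀ j : Fin n, ∃ c : ℝ, c • (u : Fin m → ℝ) = X *ᵥ Pi.single j 1 := by
    intro j
    obtain ⟨c, hc⟩ := hu ⟨X *ᵥ Pi.single j 1, ⟨Pi.single j 1, rfl⟩⟩
    exact ⟨c, congrArg Subtype.val hc⟩
  choose v hv using h2
  refine ⟨u, v, ?_⟩
  ext i j
  have := congrFun (hv j) i
  simp at this
  rw [Matrix.vecMulVec_apply, ← this, mul_comm]

theorem rank_one_sandwich {m n : ℕ} (X : Mat m n) (h : X.rank = 1)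
    (M : Matrix (Fin n) (Fin m) ℝ) : X * M * X = (X * M).trace • X := by
  obtain ⟨u, v, rfl⟩ := rank_one_factor X h
  rw [Matrix.vecMulVec_mul, Matrix.vecMulVec_mul_vecMulVec, Matrix.trace_vecMulVec]
  ext i j
  simp [Matrix.vecMulVec_apply, dotProduct_comm u]
  try ring

theorem inverse_aux {A : Type*} [Ring A] [Algebra ℝ A] (P Q : A) (a b g t : ℝ)
    (hP : P * P = P) (hQ : Q * Q = Q) (hPQ : P * (Q * P) = t • P) (hQP : Q * (P * Q) = t • Q)
    (hg : g = (1 + a) * (1 + b) - a * b * t) (hg0 : g ≠ 0) :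
    (1 + a • P + b • Q) * (1 - (a * (1 + b) / g) • P - ((1 + a) * b / g) • Q
        + (a * b / g) • (P * Q + Q * P)) = 1 ∧
    (1 - (a * (1 + b) / g) • P - ((1 + a) * b / g) • Q
        + (a * b / g) • (P * Q + Q * P)) * (1 + a • P + b • Q) = 1 := by
  have hP' : ∀ Z, P * (P * Z) = P * Z := fun Z => by rw [← mul_assoc, hP]
  have hQ' : ∀ Z, Q * (Q * Z) = Q * Z := fun Z => by rw [← mul_assoc, hQ]
  constructor
  all_goals
    simp only [mul_add, add_mul, mul_sub, sub_mul, mul_one, one_mul, smul_mul_assoc,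
      mul_smul_comm, mul_assoc, hP, hQ, hP', hQ', hPQ, hQP, smul_add, smul_sub]
    match_scalars <;> field_simp <;> rw [hg] <;> ring

/-- explicit inverse of `1ₘ + α X1 K + β X2 K` for rank-one `K`-projections. -/
theorem inverse_of_one_add_rank_one_projections
    (m n : ℕ) (hm : 0 < m) (hn : 0 < n)
    (K : Matrix (Fin n) (Fin m) ℝ) (hK : K.rank = min n m)
    (X1 X2 : Mat m n) (hX1 : InS K X1) (hX2 : InS K X2)
    (a b g : ℝ)
    (hg : g = (1 + a) * (1 + b) - a * b * (X1 * K * X2 * K).trace)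
    (hg0 : g ≠ 0)
    (Minv : Matrix (Fin m) (Fin m) ℝ)
    (hMinv : Minv = 1 - (a * (1 + b) / g) • (X1 * K) - ((1 + a) * b / g) • (X2 * K)
        + (a * b / g) • (X1 * K * X2 * K + X2 * K * X1 * K)) :
    (1 + a • (X1 * K) + b • (X2 * K)) * Minv = 1 ∧
    Minv * (1 + a • (X1 * K) + b • (X2 * K)) = 1 := by
  have h1 := rank_one_sandwich X1 hX1.2 (K * X2 * K)
  have h2 := rank_one_sandwich X2 hX2.2 (K * X1 * K)
  have ht : (X2 * (K * X1 * K)).trace = (X1 * K * X2 * K).trace := by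
    rw [show X2 * (K * X1 * K) = (X2 * K) * (X1 * K) by simp only [Matrix.mul_assoc],
      Matrix.trace_mul_comm]
    simp only [Matrix.mul_assoc]
  have ht1 : (X1 * (K * X2 * K)).trace = (X1 * K * X2 * K).trace := by
    simp only [Matrix.mul_assoc]
  rw [ht] at h2
  rw [ht1] at h1
  have key := inverse_aux (X1 * K) (X2 * K) a b g (X1 * K * X2 * K).trace
    (by rw [← Matrix.mul_assoc, hX1.1]) (by rw [← Matrix.mul_assoc, hX2.1])
    (by rw [← Matrix.smul_mul, ← h1]; simp only [Matrix.mul_assoc])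
    (by rw [← Matrix.smul_mul, ← h2]; simp only [Matrix.mul_assoc]) hg hg0
  rw [hMinv, Matrix.mul_assoc (X1 * K), Matrix.mul_assoc (X2 * K)]
  exact key
end

section
/- Let p1, q1, p2, q2 be pairwise distinct reals, X1, X2 ∈ S, with α_{12}(X1,X2) well defined and nonzero, and let (X1',X2') = R(p1,q1;p2,q2)(X1,X2). Then tr(X1' K X2' K) = tr(X1 K X2 K); in particular, α_{12} is an invariant of the map R: 1 − ((p1−q1)(p2−q2))/((p1−p2)(q1−q2))·tr(X1' K X2' K) = α_{12}(X1,X2)^{-1}. -/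
open Matrix

/-- A rank-one `K`-projection is `u vᵀ` with `vᵀ K u = 1`. -/
theorem InS.exists_vecs {m n : ℕ} {K : Matrix (Fin n) (Fin m) ℝ} {X : Mat m n} (h : InS K X) :
    ∃ (u : Fin m → ℝ) (v : Fin n → ℝ), X = vecMulVec u v ∧ v ⬝ᵥ (K *ᵥ u) = 1 := by
  obtain ⟨hp, hr⟩ := h
  have hX0 : X ≠ 0 := by
    rintro rfl
    simp at hr
  rw [Matrix.rank, finrank_eq_one_iff'] at hr
  obtain ⟨w, -, hw⟩ := hr
  have hcol : ∀ j, ∃ c : ℝ, c • (w : Fin m → ℝ) = X *ᵥ Pi.single j 1 := by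
    intro j
    obtain ⟨c, hc⟩ := hw ⟨X *ᵥ Pi.single j 1, ⟨Pi.single j 1, rfl⟩⟩
    exact ⟨c, congrArg Subtype.val hc⟩
  choose v hv using hcol
  have hX : X = vecMulVec (w : Fin m → ℝ) v := by
    ext i j
    have := congrFun (hv j) i
    simp at this
    rw [vecMulVec_apply, ← this, mul_comm]
  refine ⟨w, v, hX, ?_⟩
  generalize (w : Fin m → ℝ) = u at hX
  subst hX
  rw [Matrix.mul_assoc, mul_vecMulVec, vecMulVec_mul_vecMulVec] at hp
  obtain ⟨i, j, hij⟩ : ∃ i j, vecMulVec u v i j ≠ 0 := by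
    by_contra! hcon
    exact hX0 (by ext i j; exact hcon i j)
  have := congrFun (congrFun hp i) j
  simp only [vecMulVec_apply, Pi.smul_apply, smul_eq_mul, MulOpposite.smul_eq_mul_unop,
    MulOpposite.unop_op] at this hij
  have h2 : (v ⬝ᵥ (K *ᵥ u) - 1) * (u i * v j) = 0 := by linear_combination this
  rcases mul_eq_zero.1 h2 with h3 | h3
  · linarith
  · exact absurd h3 hij

theorem trace_vecs {m n : ℕ} (K : Matrix (Fin n) (Fin m) ℝ) (u w : Fin m → ℝ) (v z : Fin n → ℝ) :
    (vecMulVec u v * K * vecMulVec w z * K).trace = (v ⬝ᵥ (K *ᵥ w)) * (z ⬝ᵥ (K *ᵥ u)) := by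
  rw [Matrix.mul_assoc (vecMulVec u v), mul_vecMulVec, vecMulVec_mul_vecMulVec, vecMulVec_mul,
    trace_vecMulVec, smul_vecMul, dotProduct_smul, dotProduct_comm u, ← dotProduct_mulVec]
  rfl

theorem dress_vecs {m n : ℕ} (K : Matrix (Fin n) (Fin m) ℝ) (u w : Fin m → ℝ) (v z : Fin n → ℝ)
    (a b : ℝ) :
    (1 - a • (vecMulVec w z * K)) * vecMulVec u v * (1 - b • (K * vecMulVec w z))
      = vecMulVec (u - (a * (z ⬝ᵥ (K *ᵥ u))) • w) (v - (b * (v ⬝ᵥ (K *ᵥ w))) • z) := by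
  have e1 : (1 - a • (vecMulVec w z * K)) *ᵥ u = u - (a * (z ⬝ᵥ (K *ᵥ u))) • w := by
    rw [sub_mulVec, one_mulVec, smul_mulVec, ← mulVec_mulVec, vecMulVec_mulVec, mul_smul]
    rw [op_smul_eq_smul]
  have e2 : v ᵥ* (1 - b • (K * vecMulVec w z)) = v - (b * (v ⬝ᵥ (K *ᵥ w))) • z := by
    rw [vecMul_sub, vecMul_one, vecMul_smul, mul_vecMulVec, vecMul_vecMulVec, mul_smul]
  rw [mul_vecMulVec, vecMulVec_mul, e1, e2]

/-- `tr(X1' K X2' K)` is invariant under `R`; hence `α₁₂` is an invariant. -/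
theorem alpha_is_invariant_of_R
    (m n : ℕ) (hm : 0 < m) (hn : 0 < n)
    (K : Matrix (Fin n) (Fin m) ℝ) (hK : K.rank = min n m)
    (p1 q1 p2 q2 : ℝ)
    (hdist : List.Pairwise (· ≠ ·) [p1, q1, p2, q2])
    (X1 X2 : Mat m n) (hX1 : InS K X1) (hX2 : InS K X2)
    (ha : adenom K p1 q1 p2 q2 X1 X2 ≠ 0) :
    ((Rmap K p1 q1 p2 q2 (X1, X2)).1 * K * (Rmap K p1 q1 p2 q2 (X1, X2)).2 * K).trace
      = (X1 * K * X2 * K).trace ∧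
    1 - (p1 - q1) * (p2 - q2) / ((p1 - p2) * (q1 - q2)) *
        ((Rmap K p1 q1 p2 q2 (X1, X2)).1 * K * (Rmap K p1 q1 p2 q2 (X1, X2)).2 * K).trace
      = adenom K p1 q1 p2 q2 X1 X2 := by
  have main : ((Rmap K p1 q1 p2 q2 (X1, X2)).1 * K * (Rmap K p1 q1 p2 q2 (X1, X2)).2 * K).trace
      = (X1 * K * X2 * K).trace := by
    simp only [List.pairwise_cons, List.mem_cons, List.not_mem_nil, or_false, forall_eq_or_imp,
      forall_eq] at hdist
    obtain ⟨⟨-, h12, -⟩, ⟨-, hq⟩, -⟩ := hdist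
    obtain ⟨u1, v1, rfl, h1⟩ := hX1.exists_vecs
    obtain ⟨u2, v2, rfl, h2⟩ := hX2.exists_vecs
    have hD : adenom K p1 q1 p2 q2 (vecMulVec u1 v1) (vecMulVec u2 v2) =
        1 - (p1 - q1) * (p2 - q2) / ((p2 - p1) * (q2 - q1)) *
          ((v1 ⬝ᵥ (K *ᵥ u2)) * (v2 ⬝ᵥ (K *ᵥ u1))) := by
      rw [adenom, ← trace_vecs, Matrix.mul_assoc, Matrix.mul_assoc, Matrix.trace_mul_comm]
      simp only [Matrix.mul_assoc]
    unfold Rmap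
    simp only
    generalize adenom K p1 q1 p2 q2 (vecMulVec u1 v1) (vecMulVec u2 v2) = D at *
    rw [dress_vecs, dress_vecs]
    simp only [Matrix.smul_mul, Matrix.mul_smul, Matrix.trace_smul, trace_vecs]
    simp only [mulVec_sub, mulVec_smul, dotProduct_sub, sub_dotProduct, dotProduct_smul,
      smul_dotProduct, smul_eq_mul, h1, h2]
    generalize v1 ⬝ᵥ (K *ᵥ u2) = s at *
    generalize v2 ⬝ᵥ (K *ᵥ u1) = t at *
    have hp : p2 - p1 ≠ 0 := sub_ne_zero.2 (Ne.symm h12)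
    have hp' : p1 - p2 ≠ 0 := sub_ne_zero.2 h12
    have hq1 : q2 - q1 ≠ 0 := sub_ne_zero.2 (Ne.symm hq)
    have hq2 : q1 - q2 ≠ 0 := sub_ne_zero.2 hq
    have f1 : s - (p1 - q1) / (q2 - q1) * s * 1 -
        (p2 - q2) / (q1 - q2) * s * (1 - (p1 - q1) / (q2 - q1) * s * t)
        = s * ((p1 - p2) / (q1 - q2)) * D := by
      rw [hD]
      have e : q2 - q1 = -(q1 - q2) := by ring
      have e' : p2 - p1 = -(p1 - p2) := by ring
      rw [e, e']
      field_simp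
      ring
    have f2 : t - (p2 - q2) / (p2 - p1) * t * 1 -
        (p1 - q1) / (p1 - p2) * t * (1 - (p2 - q2) / (p2 - p1) * t * s)
        = t * ((q1 - q2) / (p1 - p2)) * D := by
      rw [hD]
      have e : q2 - q1 = -(q1 - q2) := by ring
      have e' : p2 - p1 = -(p1 - p2) := by ring
      rw [e, e']
      field_simp
      ring
    trans D⁻¹ * (D⁻¹ * ((s * ((p1 - p2) / (q1 - q2)) * D) * (t * ((q1 - q2) / (p1 - p2)) * D)))
    · rw [← f1, ← f2]
      ring
    · field_simp
  refine ⟨main, ?_⟩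
  rw [main, adenom]
  have e : (K * X1 * K * X2).trace = (X1 * K * X2 * K).trace := by
    rw [Matrix.mul_assoc, Matrix.mul_assoc, Matrix.trace_mul_comm]
    simp only [Matrix.mul_assoc]
  have e2 : (p1 - p2) * (q1 - q2) = (p2 - p1) * (q2 - q1) := by ring
  rw [e, e2]
end
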